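/- Let (A, +, ∘) be a strongly nilpotent ℚ-brace, and for a, b ∈ A let a·b denote the derived product (the weak limit of 2^n·(((1/2^n)·a)*b)). Then (A, +, ·) is a pre-Lie algebra over ℚ; in particular, for all a, b, c ∈ A: a·(b·c) − (a·b)·c = b·(a·c) − (b·a)·c. -/

import Mathlib

/-!
Write `t = 2^{-m}` and call a sequence `ℕ → A` polynomial if it has the form `∑ t^k • a_k`. The
main point is that in a strongly nilpotent `ℚ`-brace the pointwise product `f * g` of polynomial
sequences is again polynomial when `f` has no constant term, with orders in `t` adding up
(`LeftBrace.sstar_mem`). Since `*` is not additive on the left, this rests on the identity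
`(x + y) * v = x * v + y' * v + x * (y' * v)` with `y' = λ_x⁻¹ y`, where `λ_x y = x * y + y`
(`LeftBrace.add_star`); `y' - y` has higher weight in the strong chain, so the defect of additivity
has higher weight as well. Applied to `F(t) = (t • a) * v` and `t = t/2 + t/2` it shows that
`F(t) - 2 F(t/2)` has higher weight and is, by induction, polynomial of order at least `2`; this
difference equation forces `F` to be polynomial (`LeftBrace.qpoly_solve`).

The induction is double. The outer one is on a precision `s`: everything is computed modulo
`A^[s]`. It is needed because `λ_x⁻¹ y` involves products such as `x * x` of low weight, but as
`y'` only enters through `y' * v` it has to be known to one step less of precision. The inner one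
is a descending induction on the total weight of the two factors.

Hence `(t • a) * c = t • (a · c) + O(t^2)`, the weak limit being the coefficient of `t`, and more
generally leading coefficients of products are derived products of leading coefficients. The defect
of additivity is `O(t^2)`, which gives additivity of `·` on the left, and additive maps between
`ℚ`-vector spaces are linear. Finally, expanding `(x ∘ y) * c = x * (y * c) + x * c + y * c` for
`x = t • a`, `y = t • b` and `x ∘ y = (x + y) + x * y` shows that the `t^2`-coefficient of
`(x + y) * c - x * c - y * c` is the associator `a · (b · c) - (a · b) · c`
(`LeftBrace.assoc_sub_mem`), which is therefore symmetric in `a` and `b`.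
-/

open Filter Topology

/-- A left brace: an abelian group `(A, +)` together with a group operation `∘`
satisfying `a ∘ (b + c) + a = a ∘ b + a ∘ c`. -/
structure LeftBrace (A : Type*) [AddCommGroup A] where
  circ : A → A → A
  one : A
  inv : A → A
  circ_assoc : ∀ a b c : A, circ (circ a b) c = circ a (circ b c)
  one_circ : ∀ a : A, circ one a = a
  circ_one : ∀ a : A, circ a one = a
  inv_circ : ∀ a : A, circ (inv a) a = one
  left_dist : ∀ a b c : A, circ a (b + c) + a = circ a b + circ a c

/-- `a * b = a ∘ b - a - b`. -/
def LeftBrace.star {A : Type*} [AddCommGroup A] (B : LeftBrace A) (a b : A) : A :=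
  B.circ a b - a - b

/-- The strong radical chain: `strongChain B m` is `A^[m+1]`; `A^[1] = A` and for
`i > 1`, `A^[i]` is the additive subgroup generated by all `a * b` with
`a ∈ A^[j]`, `b ∈ A^[i-j]`, `0 < j < i`. (Inside the binder `j ≤ m` we have
`min j m = j`, so the generating set below is exactly the intended one.) -/
def LeftBrace.strongChain {A : Type*} [AddCommGroup A] (B : LeftBrace A) : ℕ → AddSubgroup A
  | 0 => ⊤
  | (m+1) => AddSubgroup.closure
      {x : A | ∃ j ≤ m, ∃ u ∈ LeftBrace.strongChain B (min j m),
        ∃ v ∈ LeftBrace.strongChain B (m - j), x = B.star u v}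
termination_by n => n
decreasing_by
  · exact Nat.lt_succ_of_le (Nat.min_le_right j m)
  · exact Nat.lt_succ_of_le (Nat.sub_le m j)

/-- A brace is strongly nilpotent if `A^[n] = 0` for some `n`. -/
def LeftBrace.StronglyNilpotent {A : Type*} [AddCommGroup A] (B : LeftBrace A) : Prop :=
  ∃ n : ℕ, B.strongChain n = ⊥

/-- A ℚ-brace: the additive group is a ℚ-vector space and `a * (e • b) = e • (a * b)`. -/
def LeftBrace.IsQBrace {A : Type*} [AddCommGroup A] [Module ℚ A] (B : LeftBrace A) : Prop :=
  ∀ (e : ℚ) (a b : A), B.star a (e • b) = e • B.star a b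

/-- `mul` is the derived product of the brace `B`: `mul a b` is the weak limit of
`2^n • (((1/2^n) • a) * b)`. -/
def LeftBrace.IsDerivedMul {A : Type*} [AddCommGroup A] [Module ℚ A] (B : LeftBrace A)
    (mul : A → A → A) : Prop :=
  ∀ a b : A, ∀ φ : A →ₗ[ℚ] ℚ,
    Tendsto (fun n : ℕ =>
        ((φ ((2 ^ n : ℚ) • B.star (((1 : ℚ) / 2 ^ n) • a) b) : ℚ) : ℝ))
      atTop (𝓝 ((φ (mul a b) : ℚ) : ℝ))

namespace LeftBrace

variable {A : Type*} [AddCommGroup A]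

/-! ### Left brace identities -/

theorem star_add (B : LeftBrace A) (a b c : A) :
    B.star a (b + c) = B.star a b + B.star a c := by
  have h := B.left_dist a b c
  have h' : B.circ a (b + c) = B.circ a b + B.circ a c - a := by rw [← h]; abel
  simp only [star, h']
  abel

theorem star_sub (B : LeftBrace A) (a b c : A) :
    B.star a (b - c) = B.star a b - B.star a c := by
  have h := B.star_add a (b - c) c
  rw [sub_add_cancel] at h
  rw [h]; abel

theorem star_zero (B : LeftBrace A) (a : A) : B.star a 0 = 0 := by
  have h := B.star_add a 0 0
  simpa using h

theorem circ_zero (B : LeftBrace A) (a : A) : B.circ a 0 = a := by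
  have h := B.star_zero a
  simp only [star, sub_zero] at h
  exact sub_eq_zero.mp h

theorem one_eq_zero (B : LeftBrace A) : B.one = 0 := by
  rw [← B.circ_zero B.one, B.one_circ]

theorem zero_star (B : LeftBrace A) (a : A) : B.star 0 a = 0 := by
  have h := B.one_circ a
  rw [one_eq_zero] at h
  simp [star, h]

theorem circ_eq (B : LeftBrace A) (a b : A) : B.circ a b = a + b + B.star a b := by
  simp only [star]; abel

theorem star_circ (B : LeftBrace A) (a b c : A) :
    B.star (B.circ a b) c = B.star a (B.star b c) + B.star a c + B.star b c := by
  have h := B.circ_assoc a b c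
  rw [circ_eq B (B.circ a b) c, circ_eq B b c, circ_eq B a (b + c + _), star_add, star_add,
    circ_eq B a b] at h
  rw [circ_eq B a b]
  rw [add_comm] at h
  rw [eq_sub_of_add_eq h]; abel

theorem circ_inv (B : LeftBrace A) (a : A) : B.circ a (B.inv a) = B.one := by
  have h : B.circ (B.inv (B.inv a)) (B.circ (B.circ (B.inv a) a) (B.inv a)) = B.one := by
    rw [B.inv_circ, B.one_circ, B.inv_circ]
  rw [B.circ_assoc (B.inv a), ← B.circ_assoc, B.inv_circ, B.one_circ] at h
  exact h

/-- The inverse `λ_x⁻¹` of the additive automorphism `λ_x : y ↦ x * y + y`, realised as the `λ`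
of the `∘`-inverse of `x`. -/
def linv (B : LeftBrace A) (x y : A) : A := B.star (B.inv x) y + y

theorem star_linv_add (B : LeftBrace A) (x y : A) :
    B.star x (B.linv x y) + B.linv x y = y := by
  have h := B.star_circ x (B.inv x) y
  rw [circ_inv, one_eq_zero, zero_star] at h
  simp only [linv, star_add]
  have : B.star x (B.star (B.inv x) y) + B.star x y + (B.star (B.inv x) y + y)
    = (B.star x (B.star (B.inv x) y) + B.star x y + B.star (B.inv x) y) + y := by abel
  rw [this, ← h, zero_add]

theorem circ_linv (B : LeftBrace A) (x y : A) : B.circ x (B.linv x y) = x + y := by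
  rw [circ_eq]
  conv_rhs => rw [← B.star_linv_add x y]
  abel

/-- The failure of additivity of `*` in its left argument, expressed through `λ_x⁻¹`; this is
`(x ∘ z) * v` for the `z` with `x ∘ z = x + y`. -/
theorem add_star (B : LeftBrace A) (x y v : A) :
    B.star (x + y) v
      = B.star x v + B.star (B.linv x y) v + B.star x (B.star (B.linv x y) v) := by
  rw [← circ_linv, star_circ]; abel

/-- The pointwise product of sequences. -/
def sstar (B : LeftBrace A) (f g : ℕ → A) : ℕ → A := fun m => B.star (f m) (g m)

/-- The pointwise `λ_f⁻¹ g`. -/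
def slinv (B : LeftBrace A) (f g : ℕ → A) : ℕ → A := fun m => B.linv (f m) (g m)

theorem slinv_eq (B : LeftBrace A) (f g : ℕ → A) :
    B.slinv f g = g - B.sstar f (B.slinv f g) := by
  ext m
  simp only [Pi.sub_apply, slinv, sstar]
  conv_rhs => enter [1]; rw [← B.star_linv_add (f m) (g m)]
  abel

theorem sstar_add (B : LeftBrace A) (f g h : ℕ → A) :
    B.sstar f (g + h) = B.sstar f g + B.sstar f h := by
  ext m; exact B.star_add _ _ _

theorem add_sstar (B : LeftBrace A) (x y v : ℕ → A) :
    B.sstar (x + y) v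
      = B.sstar x v + B.sstar (B.slinv x y) v + B.sstar x (B.sstar (B.slinv x y) v) := by
  ext m; exact B.add_star _ _ _

/-! ### Filtrations and polynomial sequences -/

/-- A decreasing filtration of `A` by subspaces, starting with `A` itself, for which `*` is
additive in the weight. -/
structure IsFilt [Module ℚ A] (B : LeftBrace A) (W : ℕ → Submodule ℚ A) : Prop where
  anti : Antitone W
  zero : W 0 = ⊤
  one : W 1 = ⊤
  star_mem : ∀ i j u v, u ∈ W i → v ∈ W j → B.star u v ∈ W (i + j)

theorem strongChain_succ (B : LeftBrace A) (m : ℕ) :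
    B.strongChain (m + 1) = AddSubgroup.closure
      {x : A | ∃ j ≤ m, ∃ u ∈ B.strongChain (min j m),
        ∃ v ∈ B.strongChain (m - j), x = B.star u v} := by
  rw [strongChain]

theorem star_mem_strongChain (B : LeftBrace A) {i j : ℕ} {u v : A}
    (hu : u ∈ B.strongChain i) (hv : v ∈ B.strongChain j) :
    B.star u v ∈ B.strongChain (i + j + 1) := by
  rw [strongChain_succ]
  refine AddSubgroup.subset_closure ⟨i, by omega, u, ?_, v, ?_, rfl⟩
  · rwa [min_eq_left (by omega)]
  · rwa [show i + j - i = j by omega]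

theorem strongChain_zero (B : LeftBrace A) : B.strongChain 0 = ⊤ := by
  rw [strongChain]

theorem strongChain_succ_le (B : LeftBrace A) (m : ℕ) :
    B.strongChain (m + 1) ≤ B.strongChain m := by
  induction m using Nat.strong_induction_on with
  | _ m ih =>
    rcases m with _ | m
    · rw [strongChain_zero]; exact le_top
    rw [strongChain_succ B (m + 1), AddSubgroup.closure_le]
    rintro x ⟨j, hj, u, hu, v, hv, rfl⟩
    rw [min_eq_left hj] at hu
    rcases j with _ | j
    · have := star_mem_strongChain B hu (ih m (by omega) hv)
      rwa [zero_add] at this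
    · have := star_mem_strongChain B (ih j (by omega) hu) hv
      rwa [show j + (m + 1 - (j + 1)) + 1 = m + 1 by omega] at this

theorem strongChain_anti (B : LeftBrace A) : Antitone B.strongChain :=
  antitone_nat_of_succ_le B.strongChain_succ_le

variable [Module ℚ A]

theorem smul_mem_strongChain (B : LeftBrace A) (hQ : B.IsQBrace) (m : ℕ) :
    ∀ (q : ℚ), ∀ x ∈ B.strongChain m, q • x ∈ B.strongChain m := by
  induction m using Nat.strong_induction_on with
  | _ m ih =>
    rcases m with _ | m
    · intro q x _; rw [strongChain_zero]; trivial
    intro q x hx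
    rw [strongChain_succ] at hx ⊢
    induction hx using AddSubgroup.closure_induction with
    | mem x hx =>
      obtain ⟨j, hj, u, hu, v, hv, rfl⟩ := hx
      refine AddSubgroup.subset_closure ⟨j, hj, u, hu, q • v, ih _ (by omega) q v hv, ?_⟩
      rw [hQ]
    | zero => rw [smul_zero]; exact zero_mem _
    | add x y _ _ hx hy => rw [smul_add]; exact add_mem hx hy
    | neg x _ hx => rw [smul_neg]; exact neg_mem hx

/-- The strong chain reindexed by weight (`chainW i = A^[i]` for `i ≥ 1`), as subspaces. -/
def chainW (B : LeftBrace A) (hQ : B.IsQBrace) (i : ℕ) : Submodule ℚ A :=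
  { B.strongChain (i - 1) with
    smul_mem' := fun q x hx => B.smul_mem_strongChain hQ (i - 1) q x hx }

theorem mem_chainW (B : LeftBrace A) (hQ : B.IsQBrace) (i : ℕ) (x : A) :
    x ∈ B.chainW hQ i ↔ x ∈ B.strongChain (i - 1) := Iff.rfl

theorem isFilt_chainW (B : LeftBrace A) (hQ : B.IsQBrace) : B.IsFilt (B.chainW hQ) where
  anti i j h x hx := by
    rw [mem_chainW] at hx ⊢
    exact B.strongChain_anti (by omega) hx
  zero := by ext x; simp [mem_chainW, strongChain_zero]
  one := by ext x; simp [mem_chainW, strongChain_zero]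
  star_mem i j u v hu hv := by
    rw [mem_chainW] at hu hv ⊢
    exact B.strongChain_anti (by omega) (B.star_mem_strongChain hu hv)

/-- The monomial sequence `m ↦ t^k • a` at `t = 2^{-m}`. -/
def mono (k : ℕ) (a : A) : ℕ → A := fun m => ((1 / 2 : ℚ) ^ m) ^ k • a

/-- Polynomials `∑ t^k • a_k` in `t = 2^{-m}` of order at least `d` in `t`, with coefficients in
the subspace `V`, as sequences in `m`. -/
def poly (V : Submodule ℚ A) (d : ℕ) : Submodule ℚ (ℕ → A) :=
  Submodule.span ℚ {f | ∃ k, d ≤ k ∧ ∃ a ∈ V, f = mono k a}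

theorem mono_mem {V : Submodule ℚ A} {d k : ℕ} {a : A} (h : d ≤ k) (ha : a ∈ V) :
    mono k a ∈ poly V d := Submodule.subset_span ⟨k, h, a, ha, rfl⟩

/-- Induction on polynomial sequences by adding monomials. There is no clause for scalar
multiplication, so this applies to statements about the non-homogeneous left argument of `*`. -/
theorem poly_induction {V : Submodule ℚ A} {d : ℕ} {p : (ℕ → A) → Prop} {f : ℕ → A}
    (hf : f ∈ poly V d) (gen : ∀ k, d ≤ k → ∀ a ∈ V, p (mono k a))
    (add : ∀ x ∈ poly V d, ∀ y ∈ poly V d, p x → p y → p (x + y)) : p f := by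
  refine Submodule.closure_induction (p := fun x _ => p x) ?_ ?_ ?_ hf
  · have := gen d le_rfl 0 V.zero_mem
    convert this using 1
    ext m; simp [mono]
  · intro x y hx hy
    exact add x hx y hy
  · rintro q _ ⟨k, hk, a, ha, rfl⟩
    have := gen k hk (q • a) (V.smul_mem q ha)
    convert this using 1
    ext m; simp [mono, smul_comm q]

theorem poly_mono {V V' : Submodule ℚ A} {d d' : ℕ} (hV : V ≤ V') (hd : d' ≤ d) :
    poly V d ≤ poly V' d' := by
  refine Submodule.span_mono ?_
  rintro f ⟨k, hk, a, ha, rfl⟩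
  exact ⟨k, hd.trans hk, a, hV ha, rfl⟩

theorem poly_apply_mem {V : Submodule ℚ A} {d : ℕ} {f : ℕ → A} (hf : f ∈ poly V d) (m : ℕ) :
    f m ∈ V := by
  refine poly_induction (p := fun f => f m ∈ V) hf ?_ ?_
  · intro k _ a ha; exact V.smul_mem _ ha
  · intro x _ y _ hx hy; exact V.add_mem hx hy

/-- The substitution `t ↦ t^l`. -/
theorem poly_comp_mul {V : Submodule ℚ A} {d l : ℕ} {f : ℕ → A} (hf : f ∈ poly V d) :
    (fun m => f (l * m)) ∈ poly V (l * d) := by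
  refine poly_induction (p := fun f => (fun m => f (l * m)) ∈ poly V (l * d)) hf ?_ ?_
  · intro k hk a ha
    have := mono_mem (d := l * d) (Nat.mul_le_mul_left l hk) ha
    convert this using 1
    ext m; simp only [mono]; congr 1
    rw [← pow_mul, ← pow_mul]; ring_nf
  · intro x _ y _ hx hy; exact add_mem hx hy

theorem poly_smul_pow {V : Submodule ℚ A} {d l : ℕ} {f : ℕ → A} (hf : f ∈ poly V d) :
    (fun m => ((1 / 2 : ℚ) ^ m) ^ l • f m) ∈ poly V (d + l) := by
  refine poly_induction
    (p := fun f => (fun m => ((1 / 2 : ℚ) ^ m) ^ l • f m) ∈ poly V (d + l)) hf ?_ ?_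
  · intro k hk a ha
    have := mono_mem (d := d + l) (Nat.add_le_add_right hk l) ha
    convert this using 1
    ext m; simp only [mono]; rw [smul_smul]; congr 1
    ring
  · intro x _ y _ hx hy
    convert add_mem hx hy using 1
    ext m; simp

/-- `G(t) - 2 G(t/2) = p(t)` is solvable for polynomials of order at least `2`: the coefficient
`1 - 2^{1-k}` vanishes only for `k = 1`. -/
theorem poly_solve {V : Submodule ℚ A} {f : ℕ → A} (hf : f ∈ poly V 2) :
    ∃ G ∈ poly V 2, ∀ m, G m - (2 : ℚ) • G (m + 1) = f m := by
  refine poly_induction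
    (p := fun f => ∃ G ∈ poly V 2, ∀ m, G m - (2 : ℚ) • G (m + 1) = f m) hf ?_ ?_
  · intro k hk a ha
    refine ⟨mono k ((1 - 2 * (1 / 2 : ℚ) ^ k)⁻¹ • a), mono_mem hk (V.smul_mem _ ha), ?_⟩
    intro m
    have h0 : (1 - 2 * (1 / 2 : ℚ) ^ k) ≠ 0 := by
      have : (1 / 2 : ℚ) ^ k ≤ (1 / 2) ^ 2 :=
        pow_le_pow_of_le_one (by norm_num) (by norm_num) hk
      have : 0 < (1 - 2 * (1 / 2 : ℚ) ^ k) := by norm_num at this ⊢; linarith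
      exact this.ne'
    simp only [mono, smul_smul, ← sub_smul]
    congr 1
    have : ((1 / 2 : ℚ) ^ (m + 1)) ^ k = ((1 / 2 : ℚ) ^ m) ^ k * (1 / 2) ^ k := by
      rw [pow_succ, mul_pow]
    rw [this]
    generalize ((1 / 2 : ℚ) ^ m) ^ k = T
    have : T * (1 - 2 * (1 / 2 : ℚ) ^ k)⁻¹
      - 2 * (T * (1 / 2) ^ k * (1 - 2 * (1 / 2 : ℚ) ^ k)⁻¹)
      = T * ((1 - 2 * (1 / 2 : ℚ) ^ k) * (1 - 2 * (1 / 2 : ℚ) ^ k)⁻¹) := by ring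
    rw [← mul_assoc 2] at this ⊢
    rw [this, mul_inv_cancel₀ h0, mul_one]
  · rintro x _ y _ ⟨G, hG, h⟩ ⟨G', hG', h'⟩
    refine ⟨G + G', add_mem hG hG', fun m => ?_⟩
    simp only [Pi.add_apply, ← h m, ← h' m, smul_add]
    abel

/-- Sequences that are, modulo the subspace `U`, polynomial in `t = 2^{-m}` of order at least `d`
with coefficients in `V`. -/
def qpoly (U V : Submodule ℚ A) (d : ℕ) : Submodule ℚ (ℕ → A) :=
  poly V d ⊔ Submodule.pi Set.univ (fun _ => U)

theorem mem_qpoly {U V : Submodule ℚ A} {d : ℕ} {f : ℕ → A} :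
    f ∈ qpoly U V d ↔ ∃ p ∈ poly V d, ∀ m, f m - p m ∈ U := by
  rw [qpoly, Submodule.mem_sup]
  constructor
  · rintro ⟨p, hp, r, hr, rfl⟩
    refine ⟨p, hp, fun m => ?_⟩
    simpa using hr m (Set.mem_univ m)
  · rintro ⟨p, hp, h⟩
    exact ⟨p, hp, f - p, fun m _ => h m, by simp⟩

theorem poly_le_qpoly {U V : Submodule ℚ A} {d : ℕ} : poly V d ≤ qpoly U V d := le_sup_left

theorem mem_qpoly_of_forall {U V : Submodule ℚ A} {d : ℕ} {f : ℕ → A} (h : ∀ m, f m ∈ U) :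
    f ∈ qpoly U V d := mem_qpoly.2 ⟨0, zero_mem _, by simpa using h⟩

theorem qpoly_mono {U U' V V' : Submodule ℚ A} {d d' : ℕ} (hU : U ≤ U') (hV : V ≤ V')
    (hd : d' ≤ d) : qpoly U V d ≤ qpoly U' V' d' := by
  intro f hf
  obtain ⟨p, hp, h⟩ := mem_qpoly.1 hf
  exact mem_qpoly.2 ⟨p, poly_mono hV hd hp, fun m => hU (h m)⟩

/-- A sequence with `F(t) - 2 F(t/2)` polynomial of order at least `2` is itself polynomial
without constant term, the coefficient of `t` being determined by the initial value. -/
theorem qpoly_solve {U V : Submodule ℚ A} {F : ℕ → A} (h0 : F 0 ∈ V)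
    (hF : (fun m => F m - (2 : ℚ) • F (m + 1)) ∈ qpoly U V 2) : F ∈ qpoly U V 1 := by
  obtain ⟨p, hp, hr⟩ := mem_qpoly.1 hF
  obtain ⟨G, hG, hGp⟩ := poly_solve hp
  refine mem_qpoly.2 ⟨G + mono 1 (F 0 - G 0), add_mem (poly_mono le_rfl (by norm_num) hG)
    (mono_mem le_rfl (sub_mem h0 (poly_apply_mem hG 0))), fun m => ?_⟩
  induction m with
  | zero => simp [mono]
  | succ m ih =>
    have h := sub_mem ih (hr m)
    have h2 := U.smul_mem (1 / 2 : ℚ) h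
    convert h2 using 1
    rw [← hGp m]
    simp only [Pi.add_apply, mono, pow_succ]
    module

/-! ### Polynomial sequences are closed under `*` -/

/-- Modulo `W s`, the product of a polynomial with coefficients in `W i` and no constant term by
a polynomial with coefficients in `W j` is a polynomial with coefficients in `W (i + j)`, orders
in `t` being additive. -/
def PStar (B : LeftBrace A) (W : ℕ → Submodule ℚ A) (s i j : ℕ) : Prop :=
  ∀ d e, 1 ≤ d → ∀ f ∈ poly (W i) d, ∀ g ∈ poly (W j) e,
    B.sstar f g ∈ qpoly (W s) (W (i + j)) (d + e)

section

variable {B : LeftBrace A} {W : ℕ → Submodule ℚ A}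

theorem PStar.mono (hW : B.IsFilt W) {s s' i j : ℕ} (h : B.PStar W s i j) (hs : s' ≤ s) :
    B.PStar W s' i j := fun d e hd f hf g hg =>
  qpoly_mono (hW.anti hs) le_rfl le_rfl (h d e hd f hf g hg)

theorem IsFilt.linv_mem (hW : B.IsFilt W) {s : ℕ} (x : A) {r : A} (hr : r ∈ W s) :
    B.linv x r ∈ W s := by
  refine add_mem (hW.anti (Nat.le_add_left s 0) (hW.star_mem 0 s _ _ ?_ hr)) hr
  rw [hW.zero]; trivial

theorem IsFilt.star_mem_right (hW : B.IsFilt W) {s : ℕ} (x : A) {r : A} (hr : r ∈ W s) :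
    B.star x r ∈ W (s + 1) := by
  have := hW.star_mem 1 s x r (by rw [hW.one]; trivial) hr
  rwa [add_comm] at this

/-- Multiplication gains one step of precision: factors known modulo `W s` determine the product
modulo `W (s + 1)`. -/
theorem IsFilt.star_congr (hW : B.IsFilt W) {s : ℕ} {x x' y y' : A} (hx : x - x' ∈ W s)
    (hy : y - y' ∈ W s) : B.star x y - B.star x' y' ∈ W (s + 1) := by
  have h1 : B.star x y = B.star x y' + B.star x (y - y') := by
    rw [← star_add]; congr 1; abel
  have h2 := B.add_star x' (x - x') y'
  rw [add_sub_cancel] at h2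
  have h3 : B.star (B.linv x' (x - x')) y' ∈ W (s + 1) :=
    hW.star_mem s 1 _ _ (hW.linv_mem _ hx) (by rw [hW.one]; trivial)
  have h4 : B.star x' (B.star (B.linv x' (x - x')) y') ∈ W (s + 1) :=
    hW.anti (Nat.le_succ _) (hW.star_mem_right _ h3)
  have h5 := hW.star_mem_right x hy
  rw [h1, h2]
  convert add_mem (add_mem h3 h4) h5 using 1
  abel

theorem PStar.sstar_mem (hW : B.IsFilt W) {s s' i j d e : ℕ} (h : B.PStar W s' i j)
    (hs : s' ≤ s + 1) (hd : 1 ≤ d) {f g : ℕ → A} (hf : f ∈ qpoly (W s) (W i) d)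
    (hg : g ∈ qpoly (W s) (W j) e) : B.sstar f g ∈ qpoly (W s') (W (i + j)) (d + e) := by
  obtain ⟨p, hp, hfp⟩ := mem_qpoly.1 hf
  obtain ⟨q, hq, hgq⟩ := mem_qpoly.1 hg
  have h1 := h d e hd p hp q hq
  have h2 : B.sstar f g - B.sstar p q ∈ qpoly (W s') (W (i + j)) (d + e) :=
    mem_qpoly_of_forall fun m => hW.anti hs (hW.star_congr (hfp m) (hgq m))
  simpa using add_mem h1 h2

/-- If `*` preserves polynomials modulo `W s` then so does `λ_b⁻¹`: the unknown `u = λ_b⁻¹ x`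
satisfies `u = x - b * u`, and iterating this equation improves its precision step by step. -/
theorem slinv_sub_mem (hW : B.IsFilt W) {s i j d e : ℕ} (h : B.PStar W s i j) (hd : 1 ≤ d)
    {b x : ℕ → A} (hb : b ∈ qpoly (W s) (W i) d) (hx : x ∈ qpoly (W s) (W j) e) :
    B.slinv b x - x ∈ qpoly (W s) (W (i + j)) (d + e) := by
  have key : ∀ k ≤ s, B.slinv b x ∈ qpoly (W k) (W j) e := by
    intro k
    induction k with
    | zero => intro _; exact mem_qpoly_of_forall fun m => by rw [hW.zero]; trivial
    | succ k ih =>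
      intro hk
      rw [slinv_eq]
      refine sub_mem (qpoly_mono (hW.anti hk) le_rfl le_rfl hx) ?_
      refine qpoly_mono le_rfl (hW.anti (Nat.le_add_left j i)) (Nat.le_add_left e d)
        ((h.mono hW hk).sstar_mem hW le_rfl hd
          (qpoly_mono (hW.anti (by omega)) le_rfl le_rfl hb) (ih (by omega)))
  have : B.slinv b x - x = -B.sstar b (B.slinv b x) := by
    conv_lhs => rw [slinv_eq]
    abel
  rw [this]
  exact neg_mem (h.sstar_mem hW (Nat.le_succ s) hd hb (key s le_rfl))

/-- The defect of additivity of `*` in the left argument is polynomial, of higher weight and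
higher order. -/
theorem add_sstar_sub_mem (hW : B.IsFilt W) {s i i' j d e n : ℕ}
    (hK : ∀ i j, 1 ≤ i → B.PStar W s i j)
    (hP : ∀ i1 j1, 1 ≤ i1 → n ≤ i1 + j1 → B.PStar W (s + 1) i1 j1)
    (hi : 1 ≤ i) (hi' : 1 ≤ i') (hn : n ≤ i + i' + j) (hd : 1 ≤ d) (he : 1 ≤ e)
    {x y v : ℕ → A} {c : ℕ} (hx : x ∈ qpoly (W s) (W i) d) (hy : y ∈ qpoly (W s) (W i') e)
    (hv : v ∈ qpoly (W s) (W j) c) :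
    B.sstar (x + y) v - B.sstar x v - B.sstar y v
      ∈ qpoly (W (s + 1)) (W (i + i' + j)) (d + e + c) := by
  set z := B.slinv x y with hz
  have hδ : z - y ∈ qpoly (W s) (W (i + i')) (d + e) :=
    slinv_sub_mem hW (hK i i' hi) hd hx hy
  set δ := z - y with hδ_def
  have hδ' : B.slinv y δ ∈ qpoly (W s) (W (i + i')) (d + e) := by
    have h1 := slinv_sub_mem hW (hK i' (i + i') hi') he hy hδ
    have h2 := add_mem (qpoly_mono le_rfl (hW.anti (Nat.le_add_left _ _))
      (Nat.le_add_left _ _) h1) hδ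
    simpa using h2
  have hzm : z ∈ qpoly (W s) (W i') e := by
    have h2 := add_mem (qpoly_mono le_rfl (hW.anti (Nat.le_add_left _ _))
      (Nat.le_add_left _ _) hδ) hy
    simpa [hδ_def] using h2
  have e1 : B.sstar (x + y) v - B.sstar x v - B.sstar y v
      = B.sstar (B.slinv y δ) v + B.sstar y (B.sstar (B.slinv y δ) v)
        + B.sstar x (B.sstar z v) := by
    rw [add_sstar B x y v, ← hz]
    have : B.sstar z v = B.sstar y v + B.sstar (B.slinv y δ) v
        + B.sstar y (B.sstar (B.slinv y δ) v) := by
      rw [← add_sstar]; congr 1; rw [hδ_def]; abel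
    conv_lhs => enter [1, 1, 1, 2]; rw [this]
    abel
  have m1 : B.sstar (B.slinv y δ) v ∈ qpoly (W (s + 1)) (W (i + i' + j)) (d + e + c) :=
    (hP (i + i') j (by omega) hn).sstar_mem hW le_rfl (by omega) hδ' hv
  have m2 : B.sstar y (B.sstar (B.slinv y δ) v)
      ∈ qpoly (W (s + 1)) (W (i + i' + j)) (d + e + c) :=
    qpoly_mono le_rfl (hW.anti (Nat.le_add_left _ _)) (Nat.le_add_left _ _)
      ((hP i' (i + i' + j) hi' (by omega)).sstar_mem hW le_rfl he hy
        (qpoly_mono (hW.anti (Nat.le_succ s)) le_rfl le_rfl m1))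
  have m3 : B.sstar x (B.sstar z v) ∈ qpoly (W (s + 1)) (W (i + i' + j)) (d + e + c) := by
    have h1 : B.sstar z v ∈ qpoly (W s) (W (i' + j)) (e + c) :=
      (hK i' j hi').sstar_mem hW (Nat.le_succ s) he hzm hv
    have h2 := (hP i (i' + j) hi (by omega)).sstar_mem hW le_rfl hd hx h1
    rwa [← add_assoc, ← add_assoc] at h2
  rw [e1]
  exact add_mem (add_mem m1 m2) m3

theorem qpoly_smul_pow {U V : Submodule ℚ A} {d l : ℕ} {f : ℕ → A} (hf : f ∈ qpoly U V d) :
    (fun m => ((1 / 2 : ℚ) ^ m) ^ l • f m) ∈ qpoly U V (d + l) := by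
  obtain ⟨p, hp, h⟩ := mem_qpoly.1 hf
  refine mem_qpoly.2 ⟨_, poly_smul_pow (l := l) hp, fun m => ?_⟩
  simp only [← smul_sub]
  exact U.smul_mem _ (h m)

/-- Reduction to constant right factors, by linearity in the right argument. -/
theorem sstar_mem_of_const (hQ : B.IsQBrace) {V : Submodule ℚ A} {U V' : Submodule ℚ A}
    {d e : ℕ} {f g : ℕ → A}
    (h : ∀ v ∈ V, B.sstar f (fun _ => v) ∈ qpoly U V' d) (hg : g ∈ poly V e) :
    B.sstar f g ∈ qpoly U V' (d + e) := by
  refine poly_induction (p := fun g => B.sstar f g ∈ qpoly U V' (d + e)) hg ?_ ?_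
  · intro k hk v hv
    have h1 := qpoly_mono le_rfl le_rfl (Nat.add_le_add_left hk d)
      (qpoly_smul_pow (l := k) (h v hv))
    convert h1 using 1
    ext m
    exact hQ _ _ _
  · intro x _ y _ hx hy
    rw [sstar_add]; exact add_mem hx hy

theorem const_mem_poly {V : Submodule ℚ A} {v : A} (hv : v ∈ V) : (fun _ => v) ∈ poly V 0 := by
  have := mono_mem (d := 0) (k := 0) le_rfl hv
  convert this using 1
  ext m; simp [LeftBrace.mono]

theorem const_mem_top (v : A) : (fun _ => v) ∈ poly (⊤ : Submodule ℚ A) 0 :=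
  const_mem_poly Submodule.mem_top

theorem mono_mem_top (d : ℕ) (a : A) : mono d a ∈ poly (⊤ : Submodule ℚ A) d :=
  mono_mem le_rfl Submodule.mem_top

/-- The step gaining one more degree of precision, by descending induction on the total weight.
For a monomial `b = t • a` the sequence `F = b * v` satisfies `F(t) - 2 F(t/2) = ` (higher
weight), since `b(t) = b(t/2) + b(t/2)`. -/
theorem PStar_succ (hQ : B.IsQBrace) (hW : B.IsFilt W) {s : ℕ}
    (hK : ∀ i j, 1 ≤ i → B.PStar W s i j) (N : ℕ) :
    ∀ i j, 1 ≤ i → s + 1 ≤ N + (i + j) → B.PStar W (s + 1) i j := by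
  induction N with
  | zero =>
    intro i j _ h d e _ f hf g hg
    exact mem_qpoly_of_forall fun m => hW.anti (by omega)
      (hW.star_mem i j _ _ (poly_apply_mem hf m) (poly_apply_mem hg m))
  | succ N ih =>
    intro i j hi h d e hd f hf g hg
    have hP : ∀ i1 j1, 1 ≤ i1 → i + j + 1 ≤ i1 + j1 → B.PStar W (s + 1) i1 j1 :=
      fun i1 j1 h1 h2 => ih i1 j1 h1 (by omega)
    refine sstar_mem_of_const hQ (fun v hv => ?_) hg
    have hv' : (fun _ => v) ∈ qpoly (W s) (W j) 0 := poly_le_qpoly (const_mem_poly hv)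
    have lin : ∀ a ∈ W i, B.sstar (mono 1 a) (fun _ => v)
        ∈ qpoly (W (s + 1)) (W (i + j)) 1 := by
      intro a ha
      refine qpoly_solve (hW.star_mem i j _ _ ?_ hv) ?_
      · simpa [LeftBrace.mono] using ha
      · -- `mono 1 ((1/2) • a)` is the shifted sequence `m ↦ mono 1 a (m + 1)`
        have hβ : mono 1 ((1 / 2 : ℚ) • a) ∈ qpoly (W s) (W i) 1 :=
          poly_le_qpoly (mono_mem le_rfl ((W i).smul_mem _ ha))
        have h1 := add_sstar_sub_mem hW hK hP hi hi (by omega) le_rfl le_rfl hβ hβ hv'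
        have h2 := qpoly_mono le_rfl (hW.anti (show i + j ≤ i + i + j by omega)) le_rfl h1
        convert h2 using 1
        have e1 : mono 1 ((1 / 2 : ℚ) • a) + mono 1 ((1 / 2 : ℚ) • a) = mono 1 a := by
          ext m; simp only [Pi.add_apply, LeftBrace.mono]; module
        rw [e1]
        ext m
        have e2 : mono 1 a (m + 1) = mono 1 ((1 / 2 : ℚ) • a) m := by
          simp only [LeftBrace.mono, pow_succ]; module
        simp only [Pi.sub_apply, sstar, e2]
        module
    refine poly_induction
      (p := fun f => B.sstar f (fun _ => v) ∈ qpoly (W (s + 1)) (W (i + j)) d) hf ?_ ?_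
    · intro k hk a ha
      obtain ⟨p, hp, hr⟩ := mem_qpoly.1 (lin a ha)
      refine mem_qpoly.2 ⟨_, poly_mono le_rfl (by omega) (poly_comp_mul (l := k) hp),
        fun m => ?_⟩
      have := hr (k * m)
      convert this using 2
      simp only [sstar, LeftBrace.mono]
      rw [pow_one, ← pow_mul, mul_comm m k]
    · intro x hx y hy hxv hyv
      have h1 := add_sstar_sub_mem hW hK hP hi hi (by omega) hd hd
        (poly_le_qpoly hx) (poly_le_qpoly hy) hv'
      have h2 := qpoly_mono le_rfl (hW.anti (show i + j ≤ i + i + j by omega))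
        (show d ≤ d + d + 0 by omega) h1
      have h3 := add_mem (add_mem h2 hxv) hyv
      convert h3 using 1
      abel

theorem PStar_all (hQ : B.IsQBrace) (hW : B.IsFilt W) (s : ℕ) :
    ∀ i j, 1 ≤ i → B.PStar W s i j := by
  induction s with
  | zero =>
    intro i j _ d e _ f _ g _
    exact mem_qpoly_of_forall fun m => by rw [hW.zero]; trivial
  | succ s ih =>
    intro i j hi
    exact PStar_succ hQ hW ih (s + 1) i j hi (by omega)

/-! ### Leading coefficients and the pre-Lie identity -/

theorem qpoly_bot {V : Submodule ℚ A} {d : ℕ} {f : ℕ → A} (hf : f ∈ qpoly ⊥ V d) :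
    f ∈ poly V d := by
  obtain ⟨p, hp, h⟩ := mem_qpoly.1 hf
  have : f = p := by
    ext m; exact sub_eq_zero.1 ((Submodule.mem_bot ℚ).1 (h m))
  rwa [this]

/-- In a strongly nilpotent `ℚ`-brace the pointwise product of polynomial sequences, the left one
without constant term, is polynomial. -/
theorem sstar_mem (hQ : B.IsQBrace) (hSN : B.StronglyNilpotent) {d e : ℕ} (hd : 1 ≤ d)
    {f g : ℕ → A} (hf : f ∈ poly ⊤ d) (hg : g ∈ poly ⊤ e) :
    B.sstar f g ∈ poly (⊤ : Submodule ℚ A) (d + e) := by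
  obtain ⟨n, hn⟩ := hSN
  have hW := B.isFilt_chainW hQ
  have hbot : B.chainW hQ (n + 1) = ⊥ := by
    ext x; rw [mem_chainW, Nat.add_sub_cancel, hn]; rfl
  rw [← hW.one] at hf hg
  have h1 := PStar_all hQ hW (n + 1) 1 1 le_rfl d e hd f hf g hg
  rw [hbot] at h1
  exact poly_mono le_top le_rfl (qpoly_bot h1)

theorem add_sstar_sub_mem' (hQ : B.IsQBrace) (hSN : B.StronglyNilpotent) {d e c : ℕ}
    (hd : 1 ≤ d) (he : 1 ≤ e) {x y v : ℕ → A} (hx : x ∈ poly ⊤ d) (hy : y ∈ poly ⊤ e)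
    (hv : v ∈ poly ⊤ c) :
    B.sstar (x + y) v - B.sstar x v - B.sstar y v ∈ poly (⊤ : Submodule ℚ A) (d + e + c) := by
  obtain ⟨n, hn⟩ := hSN
  have hW := B.isFilt_chainW hQ
  have hbot : B.chainW hQ (n + 1) = ⊥ := by
    ext x; rw [mem_chainW, Nat.add_sub_cancel, hn]; rfl
  rw [← hW.one] at hx hy hv
  have h1 := add_sstar_sub_mem (n := 0) hW (PStar_all hQ hW n)
    (fun i1 j1 h _ => PStar_all hQ hW (n + 1) i1 j1 h) le_rfl le_rfl (by omega) hd he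
    (poly_le_qpoly hx) (poly_le_qpoly hy) (poly_le_qpoly hv)
  rw [hbot] at h1
  exact poly_mono le_top le_rfl (qpoly_bot h1)

/-- The coefficient of `t^d` in a polynomial sequence of order at least `d` is recovered as a weak
limit. -/
theorem tendsto_of_sub_mono_mem {d : ℕ} {f : ℕ → A} {a : A}
    (hf : f - mono d a ∈ poly (⊤ : Submodule ℚ A) (d + 1)) (φ : A →ₗ[ℚ] ℚ) :
    Tendsto (fun n : ℕ => ((φ (((2 : ℚ) ^ n) ^ d • f n) : ℚ) : ℝ)) atTop (𝓝 ((φ a : ℚ) : ℝ)) := by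
  have key : ∀ h ∈ poly (⊤ : Submodule ℚ A) (d + 1),
      Tendsto (fun n : ℕ => ((φ (((2 : ℚ) ^ n) ^ d • h n) : ℚ) : ℝ)) atTop (𝓝 0) := by
    intro h hh
    refine poly_induction (p := fun h => Tendsto (fun n : ℕ =>
      ((φ (((2 : ℚ) ^ n) ^ d • h n) : ℚ) : ℝ)) atTop (𝓝 0)) hh ?_ ?_
    · intro k hk b _
      obtain ⟨l, rfl⟩ := Nat.exists_eq_add_of_le hk
      have h1 : Tendsto (fun n : ℕ => (((1 / 2 : ℝ) ^ (1 + l)) ^ n) * ((φ b : ℚ) : ℝ)) atTop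
          (𝓝 (0 * ((φ b : ℚ) : ℝ))) := by
        refine Tendsto.mul_const _ (tendsto_pow_atTop_nhds_zero_of_lt_one (by positivity) ?_)
        exact pow_lt_one₀ (by norm_num) (by norm_num) (by omega)
      rw [zero_mul] at h1
      refine h1.congr fun n => ?_
      simp only [LeftBrace.mono, map_smul, smul_eq_mul]
      push_cast
      rw [← mul_assoc]; congr 1
      rw [add_assoc, pow_add _ d, ← mul_assoc, ← mul_pow, ← mul_pow]
      norm_num
      rw [← pow_mul, ← pow_mul, mul_comm]
    · intro x _ y _ hx hy
      have := hx.add hy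
      rw [add_zero] at this
      refine this.congr fun n => ?_
      simp
  have h1 := (key _ hf).add_const ((φ a : ℚ) : ℝ)
  rw [zero_add] at h1
  refine h1.congr fun n => ?_
  rw [← Rat.cast_add, ← map_add]
  congr 2
  simp only [Pi.sub_apply, LeftBrace.mono, smul_sub, smul_smul, ← mul_pow]
  norm_num

theorem eq_of_forall_dual {x y : A} (h : ∀ φ : A →ₗ[ℚ] ℚ, φ x = φ y) : x = y := by
  rw [← sub_eq_zero, ← Module.forall_dual_apply_eq_zero_iff ℚ]
  intro φ
  rw [map_sub, h φ, sub_self]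

theorem leading_unique {d : ℕ} {x y : A}
    (h : mono d x - mono d y ∈ poly (⊤ : Submodule ℚ A) (d + 1)) : x = y := by
  refine eq_of_forall_dual fun φ => ?_
  have h1 := tendsto_of_sub_mono_mem h φ
  have h2 := tendsto_of_sub_mono_mem (f := mono d x) (a := x) (d := d) (by simp) φ
  exact_mod_cast tendsto_nhds_unique h2 h1

theorem exists_leading {d : ℕ} {f : ℕ → A} (hf : f ∈ poly (⊤ : Submodule ℚ A) d) :
    ∃ a, f - mono d a ∈ poly (⊤ : Submodule ℚ A) (d + 1) := by
  refine poly_induction (p := fun f => ∃ a, f - mono d a ∈ poly (⊤ : Submodule ℚ A) (d + 1))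
    hf ?_ ?_
  · intro k hk a _
    rcases hk.eq_or_lt with rfl | hk
    · exact ⟨a, by simp⟩
    · refine ⟨0, ?_⟩
      have : mono d (0 : A) = 0 := by ext m; simp [LeftBrace.mono]
      rw [this, sub_zero]
      exact mono_mem hk trivial
  · rintro x _ y _ ⟨a, ha⟩ ⟨b, hb⟩
    refine ⟨a + b, ?_⟩
    convert add_mem ha hb using 1
    ext m
    simp only [Pi.sub_apply, Pi.add_apply, LeftBrace.mono, smul_add]
    abel

theorem mono_add (d : ℕ) (a b : A) : mono d (a + b) = mono d a + mono d b := by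
  ext m; simp [LeftBrace.mono]

theorem mono_sub (d : ℕ) (a b : A) : mono d (a - b) = mono d a - mono d b := by
  ext m; simp [LeftBrace.mono, smul_sub]

theorem sstar_mono_right (hQ : B.IsQBrace) (f : ℕ → A) (e : ℕ) (c : A) (m : ℕ) :
    B.sstar f (mono e c) m = ((1 / 2 : ℚ) ^ m) ^ e • B.sstar f (fun _ => c) m :=
  hQ _ _ _

variable {mul : A → A → A}

/-- The derived product `mul a c` is the coefficient of `t` in `(t • a) * c`. -/
theorem sstar_const_sub_mem (hQ : B.IsQBrace) (hSN : B.StronglyNilpotent)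
    (hmul : B.IsDerivedMul mul) (a c : A) :
    B.sstar (mono 1 a) (fun _ => c) - mono 1 (mul a c) ∈ poly (⊤ : Submodule ℚ A) 2 := by
  have h0 : B.sstar (mono 1 a) (fun _ => c) ∈ poly (⊤ : Submodule ℚ A) (1 + 0) :=
    sstar_mem hQ hSN le_rfl (mono_mem_top 1 a) (const_mem_top c)
  obtain ⟨x, hx⟩ := exists_leading h0
  have : mul a c = x := by
    refine eq_of_forall_dual fun φ => ?_
    have h1 := tendsto_of_sub_mono_mem hx φ
    have h2 := hmul a c φ
    have h3 : (fun n : ℕ => ((φ (((2 : ℚ) ^ n) ^ 1 • B.sstar (mono 1 a) (fun _ => c) n) : ℚ) : ℝ))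
        = fun n : ℕ => ((φ ((2 ^ n : ℚ) • B.star (((1 : ℚ) / 2 ^ n) • a) c) : ℚ) : ℝ) := by
      ext n
      simp only [sstar, LeftBrace.mono, pow_one, one_div_pow]
    rw [h3] at h1
    exact_mod_cast tendsto_nhds_unique h2 h1
  rw [this]; exact hx

theorem sstar_mono_sub_mem (hQ : B.IsQBrace) (hSN : B.StronglyNilpotent)
    (hmul : B.IsDerivedMul mul) {d e : ℕ} (hd : 1 ≤ d) (a c : A) :
    B.sstar (mono d a) (mono e c) - mono (d + e) (mul a c)
      ∈ poly (⊤ : Submodule ℚ A) (d + e + 1) := by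
  -- substitute `t ↦ t^d` in `(t • a) * c` and multiply by `t^e`
  have h5 := poly_smul_pow (l := e)
    (poly_comp_mul (l := d) (sstar_const_sub_mem hQ hSN hmul a c))
  refine poly_mono le_rfl (show d + e + 1 ≤ d * 2 + e by omega) ?_
  convert h5 using 1
  ext m
  have e1 : ((1 / 2 : ℚ) ^ (d * m)) = ((1 / 2 : ℚ) ^ m) ^ d := by
    rw [← pow_mul, mul_comm]
  have e2 : B.sstar (mono d a) (fun _ => c) m = B.sstar (mono 1 a) (fun _ => c) (d * m) := by
    simp only [sstar, LeftBrace.mono, pow_one, e1]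
  have e3 : mono (d + e) (mul a c) m
      = ((1 / 2 : ℚ) ^ m) ^ e • mono 1 (mul a c) (d * m) := by
    simp only [LeftBrace.mono, pow_one, e1, smul_smul, pow_add, mul_comm]
  rw [Pi.sub_apply, Pi.sub_apply, sstar_mono_right hQ, smul_sub, e2, e3]

/-- The leading coefficient of a product of polynomial sequences is the derived product of the
leading coefficients. -/
theorem sstar_sub_mem (hQ : B.IsQBrace) (hSN : B.StronglyNilpotent)
    (hmul : B.IsDerivedMul mul) {d e : ℕ} (hd : 1 ≤ d) {f g : ℕ → A} {a c : A}
    (hf : f - mono d a ∈ poly (⊤ : Submodule ℚ A) (d + 1))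
    (hg : g - mono e c ∈ poly (⊤ : Submodule ℚ A) (e + 1)) :
    B.sstar f g - mono (d + e) (mul a c) ∈ poly (⊤ : Submodule ℚ A) (d + e + 1) := by
  have ha : mono d a ∈ poly (⊤ : Submodule ℚ A) d := mono_mem_top d a
  have hc : mono e c ∈ poly (⊤ : Submodule ℚ A) e := mono_mem_top e c
  have hf' : f ∈ poly (⊤ : Submodule ℚ A) d := by
    have := add_mem (poly_mono le_rfl (Nat.le_succ d) hf) ha
    rwa [sub_add_cancel] at this
  have h1 : B.sstar f (g - mono e c) ∈ poly (⊤ : Submodule ℚ A) (d + e + 1) :=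
    poly_mono le_rfl (show d + e + 1 ≤ d + (e + 1) by omega) (sstar_mem hQ hSN hd hf' hg)
  have h2 : B.sstar (mono d a + (f - mono d a)) (mono e c) - B.sstar (mono d a) (mono e c)
      - B.sstar (f - mono d a) (mono e c) ∈ poly (⊤ : Submodule ℚ A) (d + e + 1) :=
    poly_mono le_rfl (show d + e + 1 ≤ d + (d + 1) + e by omega)
      (add_sstar_sub_mem' hQ hSN hd (Nat.le_add_left 1 d) ha hf hc)
  have h3 : B.sstar (f - mono d a) (mono e c) ∈ poly (⊤ : Submodule ℚ A) (d + e + 1) :=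
    poly_mono le_rfl (show d + e + 1 ≤ d + 1 + e by omega)
      (sstar_mem hQ hSN (Nat.le_add_left 1 d) hf hc)
  have h4 := sstar_mono_sub_mem hQ hSN hmul (e := e) hd a c
  have h6 : B.sstar f g = B.sstar f (g - mono e c)
      + B.sstar (mono d a + (f - mono d a)) (mono e c) := by
    rw [show mono d a + (f - mono d a) = f by abel, ← sstar_add]
    congr 1; abel
  have h7 := add_mem (add_mem (add_mem h1 h2) h3) h4
  rw [h6]
  generalize B.sstar f (g - mono e c) = X1 at h7 ⊢
  generalize B.sstar (mono d a + (f - mono d a)) (mono e c) = X2 at h7 ⊢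
  generalize B.sstar (mono d a) (mono e c) = X3 at h7
  have h8 : X1 + X2 - mono (d + e) (mul a c)
      = X1 + (X2 - X3 - B.sstar (f - mono d a) (mono e c)) + B.sstar (f - mono d a) (mono e c)
        + (X3 - mono (d + e) (mul a c)) := by abel
  rw [h8]
  exact h7

theorem derived_add_left (hQ : B.IsQBrace) (hSN : B.StronglyNilpotent)
    (hmul : B.IsDerivedMul mul) (a b c : A) : mul (a + b) c = mul a c + mul b c := by
  refine leading_unique (d := 1) ?_
  have ha : mono 1 a ∈ poly (⊤ : Submodule ℚ A) 1 := mono_mem_top 1 a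
  have hb : mono 1 b ∈ poly (⊤ : Submodule ℚ A) 1 := mono_mem_top 1 b
  have h1 := add_sstar_sub_mem' hQ hSN le_rfl le_rfl ha hb
    (const_mem_top c)
  rw [← mono_add] at h1
  have h2 := sstar_const_sub_mem hQ hSN hmul (a + b) c
  have h3 := sstar_const_sub_mem hQ hSN hmul a c
  have h4 := sstar_const_sub_mem hQ hSN hmul b c
  rw [mono_add 1 (mul a c)]
  convert add_mem (add_mem (sub_mem h1 h2) h3) h4 using 1
  abel

theorem derived_lin_right (hQ : B.IsQBrace) (hmul : B.IsDerivedMul mul) (α γ : ℚ) (a b c : A) :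
    mul a (α • b + γ • c) = α • mul a b + γ • mul a c := by
  refine eq_of_forall_dual fun φ => ?_
  have h1 := hmul a (α • b + γ • c) φ
  have h2 := ((hmul a b φ).const_mul (α : ℝ)).add ((hmul a c φ).const_mul (γ : ℝ))
  have h3 := tendsto_nhds_unique h1 (h2.congr fun n => by
    rw [star_add, hQ, hQ]
    simp only [smul_add, map_add, map_smul, smul_eq_mul]
    push_cast
    ring)
  rw [map_add, map_smul, map_smul, smul_eq_mul, smul_eq_mul]
  exact_mod_cast h3

/-- Modulo `t^3`, the associator of the derived product is the `t^2`-coefficient of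
`(t • (a + b)) * c - (t • a) * c - (t • b) * c`, which is visibly symmetric in `a` and `b`. It is
obtained by expanding `(x ∘ y) * c` with `x ∘ y = (x + y) + x * y`. -/
theorem assoc_sub_mem (hQ : B.IsQBrace) (hSN : B.StronglyNilpotent)
    (hmul : B.IsDerivedMul mul) (a b c : A) :
    B.sstar (mono 1 a + mono 1 b) (fun _ => c) - B.sstar (mono 1 a) (fun _ => c)
      - B.sstar (mono 1 b) (fun _ => c) - mono 2 (mul a (mul b c) - mul (mul a b) c)
      ∈ poly (⊤ : Submodule ℚ A) 3 := by
  set x := mono 1 a with hx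
  set y := mono 1 b with hy
  set v : ℕ → A := fun _ => c with hv
  have hxm : x - mono 1 a ∈ poly (⊤ : Submodule ℚ A) 2 := by simp [hx]
  have hym : y - mono 1 b ∈ poly (⊤ : Submodule ℚ A) 2 := by simp [hy]
  have hvm : v - mono 0 c ∈ poly (⊤ : Submodule ℚ A) 1 := by
    have : v = mono 0 c := by ext m; simp [hv, LeftBrace.mono]
    simp [this]
  have hxy := sstar_sub_mem hQ hSN hmul le_rfl hxm hym
  have hyv := sstar_sub_mem hQ hSN hmul le_rfl hym hvm
  have h1 := sstar_sub_mem hQ hSN hmul le_rfl hxm hyv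
  have h2 := sstar_sub_mem hQ hSN hmul (by norm_num) hxy hvm
  have hs : x + y ∈ poly (⊤ : Submodule ℚ A) 1 :=
    add_mem (mono_mem_top 1 a) (mono_mem_top 1 b)
  have h3 := add_sstar_sub_mem' hQ hSN le_rfl (by norm_num : 1 ≤ 1 + 1) hs
    (sstar_mem hQ hSN le_rfl (mono_mem_top 1 a) (mono_mem_top 1 b))
    (const_mem_top c)
  have h4 : B.sstar (x + y + B.sstar x y) v
      = B.sstar x (B.sstar y v) + B.sstar x v + B.sstar y v := by
    ext m
    have := B.star_circ (x m) (y m) (v m)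
    rw [circ_eq] at this
    exact this
  rw [← hx, ← hy, ← hv, h4] at h3
  rw [mono_sub]
  convert sub_mem (sub_mem h1 h2) h3 using 1
  abel

end

end LeftBrace

/-- `(A, +, mul)` is a pre-Lie algebra over ℚ: `mul` is bilinear and satisfies
the pre-Lie identity. -/
theorem statement5 {A : Type*} [AddCommGroup A] [Module ℚ A] (B : LeftBrace A)
    (hQ : B.IsQBrace) (hSN : B.StronglyNilpotent)
    (mul : A → A → A) (hmul : B.IsDerivedMul mul) :
    (∀ (α γ : ℚ) (a b c : A), mul (α • a + γ • b) c = α • mul a c + γ • mul b c) ∧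
    (∀ (α γ : ℚ) (a b c : A), mul a (α • b + γ • c) = α • mul a b + γ • mul a c) ∧
    (∀ a b c : A,
      mul a (mul b c) - mul (mul a b) c = mul b (mul a c) - mul (mul b a) c) := by
  refine ⟨fun α γ a b c => ?_, fun α γ a b c => LeftBrace.derived_lin_right hQ hmul α γ a b c,
    fun a b c => ?_⟩
  · let L : A →+ A := AddMonoidHom.mk' (fun a => mul a c)
      fun a b => LeftBrace.derived_add_left hQ hSN hmul a b c
    have h : ∀ (q : ℚ) (x : A), mul (q • x) c = q • mul x c := fun q x => map_rat_smul L q x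
    rw [LeftBrace.derived_add_left hQ hSN hmul, h, h]
  · have h1 := LeftBrace.assoc_sub_mem hQ hSN hmul a b c
    have h2 := LeftBrace.assoc_sub_mem hQ hSN hmul b a c
    refine LeftBrace.leading_unique (d := 2) ?_
    convert sub_mem h2 h1 using 1
    rw [add_comm (LeftBrace.mono 1 b)]
    abel
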